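/- (Proposition 1) Let φ : ℝ → ℝ be a function that is nondecreasing on (0, ∞) and such that n ↦ n·φ(n) is convex on (0, ∞). Suppose φ is differentiable at some point n₀ > 0 with φ'(n₀) = 0. Then φ(n) = φ(n₀) for every n with 0 < n ≤ n₀; that is, φ is constant on the interval (0, n₀]. -/

import Mathlib

open Set

/-- Proposition 1: if `φ` is nondecreasing on `(0,∞)`, `n ↦ n·φ(n)` is convex on `(0,∞)`, and
`φ` is differentiable at some `n₀ > 0` with `φ'(n₀) = 0`, then `φ` is constant (equal to
`φ(n₀)`) on the interval `(0, n₀]`. -/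
theorem prop1_constant_on_Ioc
    (φ : ℝ → ℝ) (hmono : MonotoneOn φ (Set.Ioi (0 : ℝ)))
    (hconv : ConvexOn ℝ (Set.Ioi (0 : ℝ)) (fun n => n * φ n))
    (n₀ : ℝ) (hn₀ : 0 < n₀) (hderiv : HasDerivAt φ 0 n₀) :
    ∀ n, 0 < n → n ≤ n₀ → φ n = φ n₀ := by
  intro n hn hle
  refine le_antisymm (hmono hn hn₀ hle) ?_
  rcases hle.eq_or_lt with rfl | hlt
  · exact le_rfl
  have hprod : HasDerivAt (fun m => m * φ m) (φ n₀) n₀ := by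
    simpa using (hasDerivAt_id' n₀).fun_mul hderiv
  have hslope := hconv.slope_le_of_hasDerivAt hn hn₀ hlt hprod
  rw [slope_def_field, div_le_iff₀ (sub_pos.2 hlt)] at hslope
  exact le_of_mul_le_mul_left (by linarith) hn
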